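/- arXiv:1806.05200 — 2 statements merged into one kernel-verified Lean document; each statement's English description precedes it below -/
import Mathlib

section
/- For n ≥ 3, the Hilbert series of both S/I and S/in_<(I) equals (1 + n t + n t² + t³)/(1 − t)², where I is the join-meet ideal of the diamond lattice D_{n+2} and in_<(I) its initial ideal with respect to the reverse lexicographic order induced by x > y_1 > ⋯ > y_n > z. -/
open MvPolynomial

noncomputable def xP (K : Type*) [Field K] (n : ℕ) : MvPolynomial (Fin (n + 2)) K := X 0
noncomputable def zP (K : Type*) [Field K] (n : ℕ) : MvPolynomial (Fin (n + 2)) K :=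
  X (Fin.last (n + 1))
noncomputable def yP (K : Type*) [Field K] (n : ℕ) (i : Fin n) : MvPolynomial (Fin (n + 2)) K :=
  X i.succ.castSucc

/-- The join-meet ideal `I` of the diamond lattice `D_{n+2}`. -/
noncomputable def diamondIdeal (K : Type*) [Field K] (n : ℕ) :
    Ideal (MvPolynomial (Fin (n + 2)) K) :=
  Ideal.span {f | ∃ i j : Fin n, i < j ∧ f = yP K n i * yP K n j - xP K n * zP K n}

/-- The initial ideal `in_<(I)` of `I` w.r.t. the reverse lexicographic order induced by
`x > y_1 > ⋯ > y_n > z`, as computed in the paper: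
`(y_i y_j : i < j) + (x y_k z : k ≤ n-1) + (x y_n² z)`. -/
noncomputable def diamondIni (K : Type*) [Field K] (n : ℕ) (hn : 1 ≤ n) :
    Ideal (MvPolynomial (Fin (n + 2)) K) :=
  Ideal.span
    ({f | ∃ i j : Fin n, i < j ∧ f = yP K n i * yP K n j} ∪
      {f | ∃ k : Fin n, (k : ℕ) < n - 1 ∧ f = xP K n * yP K n k * zP K n} ∪
      {xP K n * (yP K n ⟨n - 1, by omega⟩) ^ 2 * zP K n})

/-- Hilbert function of `S/I` in degree `d`, i.e. `dim_K (S/I)_d = dim_K S_d/(I ∩ S_d)`. -/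
noncomputable def hilbFn (K : Type*) [Field K] {σ : Type*}
    (I : Ideal (MvPolynomial σ K)) (d : ℕ) : ℕ :=
  Module.finrank K
    ((homogeneousSubmodule σ K d) ⧸
      (Submodule.comap (homogeneousSubmodule σ K d).subtype (Submodule.restrictScalars K I)))

namespace DiamondAux

theorem ring_lemma_w {R : Type*} [CommRing R] {n : ℕ} (hn : 3 ≤ n) (w : R) (y : Fin n → R)
    (h : ∀ i j, i ≠ j → y i * y j = w) (k l : Fin n) : w * y k = w * y l := by
  by_cases hkl : k = l
  · rw [hkl]
  obtain ⟨m, hm⟩ : ∃ m : Fin n, m ∉ ({k, l} : Finset (Fin n)) := by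
    by_contra! hcon
    have h1 : (Finset.univ : Finset (Fin n)) ⊆ {k, l} := fun a _ => hcon a
    have h2 := Finset.card_le_card h1
    have h3 := Finset.card_le_two (a := k) (b := l)
    simp at h2
    omega
  simp only [Finset.mem_insert, Finset.mem_singleton, not_or] at hm
  have e1 := h l m (Ne.symm hm.2)
  have e2 := h k m (Ne.symm hm.1)
  calc w * y k = (y l * y m) * y k := by rw [e1]
    _ = (y k * y m) * y l := by ring
    _ = w * y l := by rw [e2]

theorem ring_lemma_sq {R : Type*} [CommRing R] {n : ℕ} (hn : 3 ≤ n) (w : R) (y : Fin n → R)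
    (h : ∀ i j, i ≠ j → y i * y j = w) (k : Fin n) : w * y k ^ 2 = w * w := by
  obtain ⟨l, hl⟩ : ∃ l : Fin n, l ≠ k := by
    have : Nontrivial (Fin n) := Fin.nontrivial_iff_two_le.mpr (by omega)
    exact exists_ne k
  calc w * y k ^ 2 = (w * y k) * y k := by ring
    _ = (w * y l) * y k := by rw [ring_lemma_w hn w y h k l]
    _ = w * (y l * y k) := by ring
    _ = w * w := by rw [h l k hl]

theorem ring_lemma_pow {R : Type*} [CommRing R] {n : ℕ} (hn : 3 ≤ n) (w : R) (y : Fin n → R)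
    (h : ∀ i j, i ≠ j → y i * y j = w) (k : Fin n) (e : ℕ) :
    w * y k ^ e = w ^ (1 + e / 2) * y k ^ (e % 2) := by
  induction e using Nat.strong_induction_on with
  | _ e ih =>
    by_cases he : e < 2
    · have : e = 0 ∨ e = 1 := by omega
      rcases this with rfl | rfl <;> simp
    · obtain ⟨f, rfl⟩ : ∃ f, e = f + 2 := ⟨e - 2, by omega⟩
      have h1 := ih f (by omega)
      have h2 := ring_lemma_sq hn w y h k
      have e1 : (f + 2) / 2 = f / 2 + 1 := by omega
      have e2 : (f + 2) % 2 = f % 2 := by omega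
      rw [e1, e2]
      calc w * y k ^ (f + 2) = (w * y k ^ 2) * y k ^ f := by ring
        _ = w * (w * y k ^ f) := by rw [h2]; ring
        _ = _ := by rw [h1]; ring

theorem ring_lemma_prod {R : Type*} [CommRing R] {n : ℕ} (hn : 3 ≤ n) (w : R) (y : Fin n → R)
    (h : ∀ i j, i ≠ j → y i * y j = w) (k : Fin n) (c : Fin n → ℕ) (s : Finset (Fin n)) :
    w * ∏ i ∈ s, y i ^ c i = w * y k ^ (∑ i ∈ s, c i) := by
  have hp : ∀ (i : Fin n) (e : ℕ), w * y i ^ e = w * y k ^ e := by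
    intro i e
    induction e with
    | zero => simp
    | succ e ih =>
      calc w * y i ^ (e + 1) = (w * y i ^ e) * y i := by ring
        _ = (w * y i) * y k ^ e := by rw [ih]; ring
        _ = _ := by rw [ring_lemma_w hn w y h i k]; ring
  induction s using Finset.induction_on with
  | empty => simp
  | insert i s hi ih =>
    rw [Finset.prod_insert hi, Finset.sum_insert hi]
    calc w * (y i ^ c i * ∏ i ∈ s, y i ^ c i) = (w * ∏ i ∈ s, y i ^ c i) * y i ^ c i := by ring
      _ = (w * y i ^ c i) * y k ^ (∑ i ∈ s, c i) := by rw [ih]; ring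
      _ = _ := by rw [hp]; ring

theorem ring_lemma_nf1 {R : Type*} [CommRing R] {n : ℕ} (hn : 3 ≤ n) (x z : R) (y : Fin n → R)
    (h : ∀ i j, i ≠ j → y i * y j = x * z) (k : Fin n) (a b : ℕ) (c : Fin n → ℕ)
    (ha : 1 ≤ a) (hb : 1 ≤ b) :
    x ^ a * (∏ i, y i ^ c i) * z ^ b =
      x ^ (a + (∑ i, c i) / 2) * y k ^ ((∑ i, c i) % 2) * z ^ (b + (∑ i, c i) / 2) := by
  obtain ⟨a, rfl⟩ : ∃ f, a = f + 1 := ⟨a - 1, by omega⟩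
  obtain ⟨b, rfl⟩ : ∃ f, b = f + 1 := ⟨b - 1, by omega⟩
  have h1 := ring_lemma_prod hn (x * z) y h k c Finset.univ
  rw [ring_lemma_pow hn (x * z) y h k] at h1
  calc x ^ (a + 1) * (∏ i, y i ^ c i) * z ^ (b + 1)
      = x ^ a * z ^ b * (x * z * ∏ i, y i ^ c i) := by ring
    _ = _ := by rw [h1, mul_pow]; ring

theorem ring_lemma_nf2 {R : Type*} [CommRing R] {n : ℕ} (hn : 3 ≤ n) (x z : R) (y : Fin n → R)
    (h : ∀ i j, i ≠ j → y i * y j = x * z) (k : Fin n) (a b : ℕ) (c : Fin n → ℕ)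
    (i j : Fin n) (hij : i ≠ j) (hi : 1 ≤ c i) (hj : 1 ≤ c j) :
    x ^ a * (∏ i, y i ^ c i) * z ^ b =
      x ^ (a + (∑ i, c i) / 2) * y k ^ ((∑ i, c i) % 2) * z ^ (b + (∑ i, c i) / 2) := by
  obtain ⟨c', hc'⟩ : ∃ c' : Fin n → ℕ, c = fun l => c' l + (Pi.single i 1 : Fin n → ℕ) l
      + (Pi.single j 1 : Fin n → ℕ) l := by
    refine ⟨fun l => c l - (Pi.single i 1 : Fin n → ℕ) l - (Pi.single j 1 : Fin n → ℕ) l, ?_⟩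
    funext l
    by_cases h1 : l = i
    · subst h1
      simp [Pi.single_apply, hij]; omega
    · by_cases h2 : l = j
      · subst h2
        simp [Pi.single_apply, h1]; omega
      · simp [Pi.single_apply, h1, h2]
  have hsum : ∑ i, c i = ∑ i, c' i + 2 := by
    rw [hc']
    simp [Finset.sum_add_distrib]
  have hprod : ∏ i, y i ^ c i = (∏ i, y i ^ c' i) * (x * z) := by
    rw [hc', ← h i j hij]
    simp only [pow_add, Finset.prod_mul_distrib]
    simp [Pi.single_apply, mul_assoc]
  have := ring_lemma_nf1 hn x z y h k (a + 1) (b + 1) c' (by omega) (by omega)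
  have e1 : (∑ i, c' i + 2) / 2 = (∑ i, c' i) / 2 + 1 := by omega
  have e2 : (∑ i, c' i + 2) % 2 = (∑ i, c' i) % 2 := by omega
  rw [hprod, hsum, e1, e2]
  calc _ = x ^ (a + 1) * (∏ i, y i ^ c' i) * z ^ (b + 1) := by ring
    _ = _ := by rw [this]; ring

/-- Monomial exponent `x^a y^c z^b`. -/
noncomputable def mk {n : ℕ} (a : ℕ) (c : Fin n → ℕ) (b : ℕ) : Fin (n + 2) →₀ ℕ :=
  Finsupp.equivFunOnFinite.symm (Fin.snoc (α := fun _ => ℕ) (Fin.cons (α := fun _ => ℕ) a c) b)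

@[simp] theorem mk_zero {n : ℕ} (a : ℕ) (c : Fin n → ℕ) (b : ℕ) : mk a c b 0 = a := by
  have : (0 : Fin (n + 2)) = Fin.castSucc 0 := rfl
  rw [this]
  simp [mk, -Fin.castSucc_zero]

@[simp] theorem mk_y {n : ℕ} (a : ℕ) (c : Fin n → ℕ) (b : ℕ) (i : Fin n) :
    mk a c b i.succ.castSucc = c i := by
  simp [mk, -Fin.castSucc_succ]

@[simp] theorem mk_last {n : ℕ} (a : ℕ) (c : Fin n → ℕ) (b : ℕ) :
    mk a c b (Fin.last (n + 1)) = b := by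
  simp [mk]

theorem ext3 {n : ℕ} {m m' : Fin (n + 2) →₀ ℕ} (h0 : m 0 = m' 0)
    (hy : ∀ i : Fin n, m i.succ.castSucc = m' i.succ.castSucc)
    (hl : m (Fin.last (n + 1)) = m' (Fin.last (n + 1))) : m = m' := by
  ext i
  induction i using Fin.lastCases with
  | last => exact hl
  | cast i =>
    induction i using Fin.cases with
    | zero => exact h0
    | succ i => exact hy i

theorem eq_mk {n : ℕ} (m : Fin (n + 2) →₀ ℕ) :
    m = mk (m 0) (fun i => m i.succ.castSucc) (m (Fin.last (n + 1))) := by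
  apply ext3 <;> intros <;> simp only [mk_zero, mk_y, mk_last]

theorem mk_inj {n : ℕ} {a a' b b' : ℕ} {c c' : Fin n → ℕ} :
    mk a c b = mk a' c' b' ↔ a = a' ∧ c = c' ∧ b = b' := by
  constructor
  · intro h
    refine ⟨?_, ?_, ?_⟩
    · simpa only [mk_zero] using DFunLike.congr_fun h 0
    · funext i
      simpa only [mk_y] using DFunLike.congr_fun h i.succ.castSucc
    · simpa only [mk_last] using DFunLike.congr_fun h (Fin.last (n + 1))
  · rintro ⟨rfl, rfl, rfl⟩; rfl

theorem mk_add {n : ℕ} {a a' b b' : ℕ} {c c' : Fin n → ℕ} :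
    mk a c b + mk a' c' b' = mk (a + a') (c + c') (b + b') := by
  apply ext3 <;> intros <;> simp only [mk_zero, mk_y, mk_last, Finsupp.add_apply, Pi.add_apply]

theorem degree_mk {n : ℕ} (a : ℕ) (c : Fin n → ℕ) (b : ℕ) :
    (mk a c b).degree = a + ∑ i, c i + b := by
  rw [Finsupp.degree_eq_sum, Fin.sum_univ_castSucc, Fin.sum_univ_succ]
  simp only [Fin.castSucc_zero, mk_zero, mk_y, mk_last]

theorem monomial_mk (K : Type*) [Field K] {n : ℕ} (a : ℕ) (c : Fin n → ℕ) (b : ℕ) :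
    (monomial (mk a c b) 1 : MvPolynomial (Fin (n + 2)) K) =
      xP K n ^ a * (∏ i, yP K n i ^ c i) * zP K n ^ b := by
  rw [MvPolynomial.monomial_eq, Finsupp.prod_fintype _ _ (by simp), Fin.prod_univ_castSucc,
    Fin.prod_univ_succ]
  simp only [Fin.castSucc_zero, mk_zero, mk_y, mk_last, map_one, one_mul, xP, yP, zP]

/-- Normal-form monomials. -/
def Std {n : ℕ} (l : Fin n) (a : ℕ) (c : Fin n → ℕ) (b : ℕ) : Prop :=
  (∀ i j, i < j → ¬ (1 ≤ c i ∧ 1 ≤ c j)) ∧ (∀ k, k ≠ l → ¬ (1 ≤ a ∧ 1 ≤ c k ∧ 1 ≤ b)) ∧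
    ¬ (1 ≤ a ∧ 2 ≤ c l ∧ 1 ≤ b)

/-- The index type of normal-form monomials of degree `d`. -/
abbrev T (n d : ℕ) : Type :=
  (Fin (d + 1) ⊕ (Fin n × Fin d)) ⊕ ((Fin n × Fin (d - 1)) ⊕ Fin (d - 2))

noncomputable def tm {n : ℕ} (l : Fin n) (d : ℕ) : T n d → (Fin (n + 2) →₀ ℕ)
  | .inl (.inl i) => mk i 0 (d - i)
  | .inl (.inr (k, j)) => mk (d - 1 - j) (Pi.single k (j + 1)) 0
  | .inr (.inl (k, j)) => mk 0 (Pi.single k (j + 1)) (d - 1 - j)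
  | .inr (.inr j) => mk (j + 1) (Pi.single l 1) (d - 2 - j)

theorem tm_degree {n : ℕ} (l : Fin n) (d : ℕ) (t : T n d) : (tm l d t).degree = d := by
  rcases t with (i | ⟨k, j⟩) | (⟨k, j⟩ | j) <;> simp only [tm, degree_mk] <;> simp <;> omega

theorem single_inj {n : ℕ} {k k' : Fin n} {a a' : ℕ}
    (h : (Pi.single k (a + 1) : Fin n → ℕ) = Pi.single k' (a' + 1)) : k = k' ∧ a = a' := by
  have h1 := congrFun h k
  by_cases hk : k = k'
  · subst hk
    simp at h1
    exact ⟨rfl, h1⟩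
  · simp [Pi.single_apply, hk] at h1

theorem single_ne {n : ℕ} {k : Fin n} {a : ℕ} :
    (Pi.single k (a + 1) : Fin n → ℕ) ≠ 0 := by
  intro h
  have h1 := congrFun h k
  simp at h1

theorem tm_inj {n : ℕ} (l : Fin n) (d : ℕ) : Function.Injective (tm l d) := by
  rintro ((⟨i, hi⟩ | ⟨k, j, hj⟩) | (⟨k, j, hj⟩ | ⟨j, hj⟩)) ((⟨i', hi'⟩ | ⟨k', j', hj'⟩) | (⟨k', j', hj'⟩ | ⟨j', hj'⟩)) h <;>
    simp only [tm, mk_inj] at h <;> obtain ⟨h1, h2, h3⟩ := h <;>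
    first
    | exact absurd h2 single_ne
    | exact absurd h2.symm single_ne
    | exact absurd h2 (single_ne (a := 0))
    | exact absurd h2.symm (single_ne (a := 0))
    | (subst h1; rfl)
    | (obtain ⟨rfl, rfl⟩ := single_inj h2; rfl)
    | (exfalso; omega)
    | (obtain rfl : j = j' := by omega
       rfl)

theorem tm_surj {n : ℕ} (l : Fin n) (a : ℕ) (c : Fin n → ℕ) (b : ℕ) (h : Std l a c b) (d : ℕ)
    (hd : a + ∑ i, c i + b = d) : ∃ t, tm l d t = mk a c b := by
  obtain ⟨h1, h2, h3⟩ := h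
  by_cases hc : c = 0
  · subst hc
    simp at hd
    refine ⟨.inl (.inl ⟨a, by omega⟩), ?_⟩
    simp only [tm, mk_inj]
    refine ⟨trivial, trivial, by omega⟩
  · obtain ⟨k, hk⟩ : ∃ k, c k ≠ 0 := by
      by_contra! hcon
      exact hc (funext hcon)
    obtain ⟨e, he⟩ : ∃ e, c k = e + 1 := ⟨c k - 1, by omega⟩
    have hck : c = Pi.single k (e + 1) := by
      funext i
      by_cases hik : i = k
      · subst hik; simp [he]
      · simp only [Pi.single_apply, hik, if_false]
        rcases lt_or_gt_of_ne hik with hlt | hlt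
        · have := h1 _ _ hlt; omega
        · have := h1 _ _ hlt; omega
    have hs : ∑ i, c i = e + 1 := by rw [hck]; simp
    rw [hs] at hd
    by_cases hb : b = 0
    · subst hb
      refine ⟨.inl (.inr (k, ⟨e, by omega⟩)), ?_⟩
      simp only [tm, mk_inj]
      exact ⟨by omega, hck.symm, trivial⟩
    by_cases ha : a = 0
    · subst ha
      refine ⟨.inr (.inl (k, ⟨e, by omega⟩)), ?_⟩
      simp only [tm, mk_inj]
      exact ⟨trivial, hck.symm, by omega⟩
    · have hkl : k = l := by
        by_contra hkl
        exact h2 k hkl ⟨by omega, by omega, by omega⟩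
      subst hkl
      have he0 : e = 0 := by omega
      subst he0
      refine ⟨.inr (.inr ⟨a - 1, by omega⟩), ?_⟩
      simp only [tm, mk_inj]
      exact ⟨by omega, hck.symm, by omega⟩

theorem single_std {n : ℕ} (k : Fin n) (e : ℕ) (i j : Fin n) (hij : i < j) :
    ¬ (1 ≤ (Pi.single k e : Fin n → ℕ) i ∧ 1 ≤ (Pi.single k e : Fin n → ℕ) j) := by
  simp only [Pi.single_apply]
  rintro ⟨h1, h2⟩
  split_ifs at h1 h2 <;> omega

theorem tm_std {n : ℕ} (l : Fin n) (d : ℕ) (t : T n d) :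
    Std l (tm l d t 0) (fun i => tm l d t i.succ.castSucc) (tm l d t (Fin.last (n + 1))) := by
  rcases t with (⟨i, hi⟩ | ⟨k, j, hj⟩) | (⟨k, j, hj⟩ | ⟨j, hj⟩) <;>
    simp only [tm, mk_zero, mk_y, mk_last]
  · refine ⟨?_, ?_, ?_⟩ <;> simp
  · refine ⟨single_std _ _, ?_, ?_⟩ <;> simp
  · refine ⟨single_std _ _, ?_, ?_⟩ <;> simp
  · refine ⟨single_std _ _, ?_, ?_⟩
    · intro k hk
      simp [Pi.single_apply, hk]
    · simp

theorem hilb_eq (K : Type*) [Field K] {σ : Type*} (I : Ideal (MvPolynomial σ K)) (d : ℕ)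
    {τ : Type*} [Fintype τ] (s : τ → (σ →₀ ℕ)) (hinj : Function.Injective s)
    (hdeg : ∀ t, (s t).degree = d) (L : MvPolynomial σ K →ₗ[K] MvPolynomial σ K)
    (hL : ∀ f ∈ I, L f = 0) (hLs : ∀ t, L (monomial (s t) 1) = monomial (s t) 1)
    (hspan : ∀ m : σ →₀ ℕ, m.degree = d →
      (monomial m 1 ∈ I ∨ ∃ t, (monomial m 1 - monomial (s t) 1 : MvPolynomial σ K) ∈ I)) :
    hilbFn K I d = Fintype.card τ := by
  classical
  set Q := Submodule.comap (homogeneousSubmodule σ K d).subtype (Submodule.restrictScalars K I)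
    with hQ
  have hhom : ∀ m : σ →₀ ℕ, m.degree = d →
      (monomial m 1 : MvPolynomial σ K) ∈ homogeneousSubmodule σ K d := by
    intro m hm
    exact isHomogeneous_monomial _ hm
  let v : τ → (homogeneousSubmodule σ K d) ⧸ Q := fun t =>
    Q.mkQ ⟨monomial (s t) 1, hhom _ (hdeg t)⟩
  have hv : LinearIndependent K v := by
    rw [Fintype.linearIndependent_iff]
    intro g hg
    have h1 : Q.mkQ (∑ t, g t • (⟨monomial (s t) 1, hhom _ (hdeg t)⟩ :
        homogeneousSubmodule σ K d)) = 0 := by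
      rw [map_sum, ← hg]
      simp only [map_smul, v]
    rw [Submodule.mkQ_apply, Submodule.Quotient.mk_eq_zero, hQ, Submodule.mem_comap] at h1
    simp only [map_sum, map_smul, Submodule.subtype_apply, Submodule.restrictScalars_mem] at h1
    have h2 := hL _ h1
    simp only [map_sum, map_smul, hLs] at h2
    intro t
    have h3 := congrArg (coeff (s t)) h2
    simpa [coeff_sum, coeff_monomial, hinj.eq_iff] using h3
  have hs : ⊤ ≤ Submodule.span K (Set.range v) := by
    rintro q -
    obtain ⟨⟨f, hf⟩, rfl⟩ := Submodule.mkQ_surjective Q q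
    have hsub : (⟨f, hf⟩ : homogeneousSubmodule σ K d) =
        ∑ m ∈ f.support.attach, coeff m.1 f •
          (⟨monomial m.1 1, hhom _ (by
            have := hf (mem_support_iff.mp m.2)
            rw [← this, Finsupp.degree_eq_weight_one]; rfl)⟩ : homogeneousSubmodule σ K d) := by
      apply Subtype.ext
      simp only [Submodule.coe_sum, Submodule.coe_smul]
      rw [Finset.sum_attach f.support (fun m => coeff m f • (monomial m 1 : MvPolynomial σ K))]
      conv_lhs => rw [f.as_sum]
      apply Finset.sum_congr rfl
      intro m _
      simp [smul_monomial]
    rw [hsub, map_sum]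
    apply Submodule.sum_mem
    rintro ⟨m, hm⟩ -
    rw [map_smul]
    apply Submodule.smul_mem
    have hmd : m.degree = d := by
      have := hf (mem_support_iff.mp hm)
      rw [← this, Finsupp.degree_eq_weight_one]; rfl
    rcases hspan m hmd with h | ⟨t, ht⟩
    · convert Submodule.zero_mem _
      rw [Submodule.mkQ_apply, Submodule.Quotient.mk_eq_zero]
      exact h
    · have hmt : Q.mkQ ⟨monomial m 1, hhom m hmd⟩ = v t := by
        simp only [v, Submodule.mkQ_apply]
        rw [Submodule.Quotient.eq]
        exact ht
      rw [hmt]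
      exact Submodule.subset_span (Set.mem_range_self t)
  exact Module.finrank_eq_card_basis (Module.Basis.mk hv hs)

theorem kills (K : Type*) [Field K] {σ : Type*} (G : Set (MvPolynomial σ K))
    (L : MvPolynomial σ K →ₗ[K] MvPolynomial σ K)
    (hG : ∀ g ∈ G, ∀ m, L (monomial m 1 * g) = 0) : ∀ f ∈ Ideal.span G, L f = 0 := by
  have key : ∀ f ∈ Ideal.span G, ∀ h, L (h * f) = 0 := by
    intro f hf
    induction hf using Submodule.span_induction with
    | mem g hg =>
      intro h
      have : L ∘ₗ LinearMap.mulRight K g = 0 := by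
        apply (basisMonomials σ K).ext
        intro m
        simp [hG g hg m]
      exact LinearMap.congr_fun this h
    | zero => simp
    | add a b _ _ ha hb => intro h; rw [mul_add, map_add, ha, hb, add_zero]
    | smul r a _ ha => intro h; rw [smul_eq_mul, ← mul_assoc]; exact ha _
  intro f hf
  simpa using key f hf 1

theorem card_T (n d : ℕ) :
    Fintype.card (T n d) = ((d + 1) + n * d) + (n * (d - 1) + (d - 2)) := by
  simp [T]

theorem series (n : ℕ) (f : ℕ → ℕ) (hf : ∀ d, f d = ((d + 1) + n * d) + (n * (d - 1) + (d - 2))) :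
    (PowerSeries.mk fun d => (f d : ℚ)) * (1 - PowerSeries.X) ^ 2 =
      1 + (n : PowerSeries ℚ) * PowerSeries.X + (n : PowerSeries ℚ) * PowerSeries.X ^ 2 +
        PowerSeries.X ^ 3 := by
  have e1 : (PowerSeries.mk fun d => (f d : ℚ)) * (1 - PowerSeries.X) ^ 2 =
      (PowerSeries.mk fun d => (f d : ℚ)) - (PowerSeries.mk fun d => (f d : ℚ)) * PowerSeries.X
      - (PowerSeries.mk fun d => (f d : ℚ)) * PowerSeries.X
      + (PowerSeries.mk fun d => (f d : ℚ)) * PowerSeries.X * PowerSeries.X := by ring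
  have e2 : ∀ g : PowerSeries ℚ, (n : PowerSeries ℚ) * g = (n : ℚ) • g := by
    intro g
    rw [PowerSeries.smul_eq_C_mul]
    simp
  rw [e1, e2, e2]
  have h0 := hf 0
  have h1 := hf 1
  have h2 := hf 2
  have h3 := hf 3
  ext d
  rcases d with _ | _ | _ | _ | d
  · simp [h0]
  · simp [PowerSeries.coeff_succ_mul_X, PowerSeries.coeff_X_pow, PowerSeries.coeff_X, PowerSeries.coeff_one, h0, h1]
    ring
  · simp [PowerSeries.coeff_succ_mul_X, PowerSeries.coeff_X_pow, PowerSeries.coeff_X, PowerSeries.coeff_one,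
      h0, h1, h2]
    ring
  · simp [PowerSeries.coeff_succ_mul_X, PowerSeries.coeff_X_pow, PowerSeries.coeff_X, PowerSeries.coeff_one,
      h1, h2, h3]
    ring
  · have a1 := hf (d + 1 + 1 + 1 + 1)
    have a2 := hf (d + 1 + 1 + 1)
    have a3 := hf (d + 1 + 1)
    simp only [Nat.add_sub_cancel, show d + 1 + 1 + 1 + 1 - 2 = d + 2 by omega,
      show d + 1 + 1 + 1 - 2 = d + 1 by omega, show d + 1 + 1 - 2 = d by omega] at a1 a2 a3
    simp [PowerSeries.coeff_succ_mul_X, PowerSeries.coeff_X_pow, PowerSeries.coeff_X, PowerSeries.coeff_one,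
      a1, a2, a3]
    ring

theorem yy_mono (K : Type*) [Field K] {n : ℕ} (i j : Fin n) : yP K n i * yP K n j =
    monomial (mk 0 (Pi.single i 1 + Pi.single j 1) 0) 1 := by
  rw [monomial_mk]
  simp only [Pi.add_apply, pow_add, Finset.prod_mul_distrib]
  simp [Pi.single_apply]

theorem xz_mono (K : Type*) [Field K] {n : ℕ} : xP K n * zP K n =
    monomial (mk 1 0 1) 1 := by
  rw [monomial_mk]
  simp

theorem xyz_mono (K : Type*) [Field K] {n : ℕ} (k : Fin n) (e : ℕ) :
    xP K n * yP K n k ^ e * zP K n = monomial (mk 1 (Pi.single k e) 1) 1 := by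
  rw [monomial_mk]
  simp [Pi.single_apply]

/-- The linear map determined by its values on monomials. -/
noncomputable def lin (K : Type*) [Field K] {σ : Type*}
    (F : (σ →₀ ℕ) → MvPolynomial σ K) : MvPolynomial σ K →ₗ[K] MvPolynomial σ K :=
  (basisMonomials σ K).constr K F

theorem lin_mono (K : Type*) [Field K] {σ : Type*}
    (F : (σ →₀ ℕ) → MvPolynomial σ K) (m : σ →₀ ℕ) : lin K F (monomial m 1) = F m := by
  have := (basisMonomials σ K).constr_basis K F m
  simpa [lin] using this

theorem mem_of_le (K : Type*) [Field K] {n : ℕ} (I : Ideal (MvPolynomial (Fin (n + 2)) K))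
    (a a' b b' : ℕ) (c c' : Fin n → ℕ) (h : monomial (mk a' c' b') 1 ∈ I)
    (ha : a' ≤ a) (hc : ∀ i, c' i ≤ c i) (hb : b' ≤ b) : monomial (mk a c b) 1 ∈ I := by
  have h1 : mk a c b = mk (a - a') (c - c') (b - b') + mk a' c' b' := by
    rw [mk_add, mk_inj]
    refine ⟨by omega, ?_, by omega⟩
    funext i
    have := hc i
    simp only [Pi.add_apply, Pi.sub_apply]
    omega
  have h2 : (monomial (mk a c b) 1 : MvPolynomial (Fin (n + 2)) K) =
      monomial (mk (a - a') (c - c') (b - b')) 1 * monomial (mk a' c' b') 1 := by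
    rw [h1, monomial_mul, one_mul]
  rw [h2]
  exact Ideal.mul_mem_left _ _ h

open Classical in
theorem ini (K : Type*) [Field K] (n : ℕ) (hn : 1 ≤ n) (d : ℕ) :
    hilbFn K (diamondIni K n hn) d = Fintype.card (T n d) := by
  set l : Fin n := ⟨n - 1, by omega⟩ with hl
  let P : (Fin (n + 2) →₀ ℕ) → Prop := fun m =>
    Std l (m 0) (fun i => m i.succ.castSucc) (m (Fin.last (n + 1)))
  have hP : ∀ a c b, P (mk a c b) ↔ Std l a c b := by
    intro a c b
    simp only [P, mk_zero, mk_y, mk_last]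
  refine hilb_eq K _ d (tm l d) (tm_inj l d) (tm_degree l d)
    (lin K fun m => if P m then monomial m 1 else 0) ?_ ?_ ?_
  · apply kills
    have key : ∀ m a c b, ¬ P (m + mk a c b) →
        lin K (fun m => if P m then monomial m 1 else 0)
          ((monomial m 1 : MvPolynomial (Fin (n + 2)) K) * monomial (mk a c b) 1) = 0 := by
      intro m a c b h
      rw [monomial_mul, one_mul, lin_mono, if_neg h]
    rintro g ((⟨i, j, hij, rfl⟩ | ⟨k, hk, rfl⟩) | hg) m
    · rw [yy_mono]
      apply key
      rw [eq_mk m, mk_add, hP]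
      rintro ⟨h1, -, -⟩
      refine h1 i j hij ?_
      simp only [Pi.add_apply, Pi.single_eq_same]
      omega
    · have := xyz_mono K k 1
      rw [pow_one] at this
      rw [this]
      apply key
      rw [eq_mk m, mk_add, hP]
      rintro ⟨-, h1, -⟩
      refine h1 k ?_ ?_
      · rintro rfl
        simp [hl] at hk
      · simp only [Pi.add_apply, Pi.single_eq_same]
        omega
    · rw [Set.mem_singleton_iff] at hg
      rw [hg, xyz_mono]
      apply key
      rw [eq_mk m, mk_add, hP]
      rintro ⟨-, -, h1⟩
      refine h1 ?_
      simp only [Pi.add_apply, hl, Pi.single_eq_same]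
      omega
  · intro t
    rw [lin_mono, if_pos]
    exact tm_std l d t
  · intro m hm
    rw [eq_mk m] at hm ⊢
    generalize m 0 = a at *
    generalize m (Fin.last (n + 1)) = b at *
    generalize (fun i : Fin n => m i.succ.castSucc) = c at *
    rw [degree_mk] at hm
    by_cases hs : Std l a c b
    · right
      obtain ⟨t, ht⟩ := tm_surj l a c b hs d hm
      refine ⟨t, ?_⟩
      rw [ht, sub_self]
      exact Ideal.zero_mem _
    · left
      by_cases h1 : ∃ i j, i < j ∧ (1 ≤ c i ∧ 1 ≤ c j)
      · obtain ⟨i, j, hij, hi, hj⟩ := h1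
        refine mem_of_le K _ a 0 b 0 c (Pi.single i 1 + Pi.single j 1) ?_ (by omega) ?_ (by omega)
        · rw [← yy_mono]
          exact Ideal.subset_span (Or.inl (Or.inl ⟨i, j, hij, rfl⟩))
        · intro k
          simp only [Pi.add_apply, Pi.single_apply]
          split_ifs with h1 h2 h2
          · exact absurd (h1.symm.trans h2) (ne_of_lt hij)
          · subst h1; omega
          · subst h2; omega
          · omega
      by_cases h2 : ∃ k, k ≠ l ∧ (1 ≤ a ∧ 1 ≤ c k ∧ 1 ≤ b)
      · obtain ⟨k, hk, ha, hc, hb⟩ := h2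
        refine mem_of_le K _ a 1 b 1 c (Pi.single k 1) ?_ (by omega) ?_ (by omega)
        · rw [← xyz_mono, pow_one]
          refine Ideal.subset_span (Or.inl (Or.inr ⟨k, ?_, rfl⟩))
          have : (k : ℕ) ≠ n - 1 := fun h => hk (Fin.ext h)
          omega
        · intro i
          simp only [Pi.single_apply]
          split_ifs with h1
          · subst h1; omega
          · omega
      by_cases h3 : 1 ≤ a ∧ 2 ≤ c l ∧ 1 ≤ b
      · obtain ⟨ha, hc, hb⟩ := h3
        refine mem_of_le K _ a 1 b 1 c (Pi.single l 2) ?_ (by omega) ?_ (by omega)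
        · rw [← xyz_mono]
          exact Ideal.subset_span (Or.inr rfl)
        · intro i
          simp only [Pi.single_apply]
          split_ifs with h1
          · subst h1; omega
          · omega
      · exact absurd ⟨fun i j hij h => h1 ⟨i, j, hij, h⟩, fun k hk h => h2 ⟨k, hk, h⟩, h3⟩ hs

/-- Monomials that are alone in their class modulo the diamond ideal. -/
def Pure {n : ℕ} (a : ℕ) (c : Fin n → ℕ) (b : ℕ) : Prop :=
  (∀ i j, i < j → ¬ (1 ≤ c i ∧ 1 ≤ c j)) ∧ (a = 0 ∨ b = 0)

open Classical in
/-- Normal form of a monomial modulo the diamond ideal. -/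
noncomputable def nf {n : ℕ} (l : Fin n) (a : ℕ) (c : Fin n → ℕ) (b : ℕ) : Fin (n + 2) →₀ ℕ :=
  if Pure a c b then mk a c b else
    mk (a + (∑ i, c i) / 2) (Pi.single l ((∑ i, c i) % 2)) (b + (∑ i, c i) / 2)

theorem nf_std {n : ℕ} (l : Fin n) (a : ℕ) (c : Fin n → ℕ) (b : ℕ) (h : Std l a c b) :
    nf l a c b = mk a c b := by
  unfold nf
  split_ifs with hP
  · rfl
  · obtain ⟨h1, h2, h3⟩ := h
    have hab : 1 ≤ a ∧ 1 ≤ b := by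
      by_contra hab
      exact hP ⟨h1, by omega⟩
    have hc : c = Pi.single l (c l) := by
      funext i
      by_cases hi : i = l
      · subst hi; simp
      · have := h2 i hi
        simp only [Pi.single_apply, hi, if_false]
        omega
    have hcl : c l ≤ 1 := by omega
    have hs : ∑ i, c i = c l := by
      rw [hc]; simp
    rw [hs, mk_inj]
    refine ⟨by omega, ?_, by omega⟩
    rw [Nat.mod_eq_of_lt (by omega)]
    exact hc.symm

theorem nf_exists {n : ℕ} (l : Fin n) (a : ℕ) (c : Fin n → ℕ) (b : ℕ) (d : ℕ)
    (hd : a + ∑ i, c i + b = d) : ∃ t, tm l d t = nf l a c b := by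
  unfold nf
  split_ifs with hP
  · apply tm_surj l a c b _ d hd
    obtain ⟨h1, h2⟩ := hP
    exact ⟨h1, fun k hk h => by omega, fun h => by omega⟩
  · apply tm_surj
    · refine ⟨single_std _ _, ?_, ?_⟩
      · intro k hk
        simp [hk]
      · simp only [Pi.single_eq_same]
        omega
    · simp only [Finset.sum_pi_single', Finset.mem_univ, if_true]
      omega

theorem nf_mem (K : Type*) [Field K] {n : ℕ} (hn : 3 ≤ n) (l : Fin n) (a : ℕ) (c : Fin n → ℕ)
    (b : ℕ) : (monomial (mk a c b) 1 - monomial (nf l a c b) 1 : MvPolynomial (Fin (n + 2)) K) ∈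
      diamondIdeal K n := by
  unfold nf
  split_ifs with hP
  · rw [sub_self]; exact Ideal.zero_mem _
  · rw [← Ideal.Quotient.eq, monomial_mk, monomial_mk]
    have hlt : ∀ i j : Fin n, i < j → Ideal.Quotient.mk (diamondIdeal K n) (yP K n i) *
        Ideal.Quotient.mk (diamondIdeal K n) (yP K n j) =
        Ideal.Quotient.mk (diamondIdeal K n) (xP K n) *
        Ideal.Quotient.mk (diamondIdeal K n) (zP K n) := by
      intro i j hij
      rw [← map_mul, ← map_mul, Ideal.Quotient.eq]
      exact Ideal.subset_span ⟨i, j, hij, rfl⟩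
    have hne : ∀ i j : Fin n, i ≠ j → Ideal.Quotient.mk (diamondIdeal K n) (yP K n i) *
        Ideal.Quotient.mk (diamondIdeal K n) (yP K n j) =
        Ideal.Quotient.mk (diamondIdeal K n) (xP K n) *
        Ideal.Quotient.mk (diamondIdeal K n) (zP K n) := by
      intro i j hij
      rcases lt_or_gt_of_ne hij with h | h
      · exact hlt i j h
      · rw [mul_comm]; exact hlt j i h
    have hsing : ∀ e : ℕ, ∏ i, yP K n i ^ ((Pi.single l e : Fin n → ℕ) i) = yP K n l ^ e := by
      intro e
      simp [Pi.single_apply]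
    rw [hsing]
    simp only [map_mul, map_pow, map_prod]
    by_cases h1 : ∃ i j, i < j ∧ (1 ≤ c i ∧ 1 ≤ c j)
    · obtain ⟨i, j, hij, hi, hj⟩ := h1
      exact ring_lemma_nf2 hn _ _ _ hne l a b c i j (ne_of_lt hij) hi hj
    · have hab : ¬ (a = 0 ∨ b = 0) := fun h => hP ⟨fun i j hij h => h1 ⟨i, j, hij, h⟩, h⟩
      exact ring_lemma_nf1 hn _ _ _ hne l a b c (by omega) (by omega)

theorem main (K : Type*) [Field K] (n : ℕ) (hn : 3 ≤ n) (d : ℕ) :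
    hilbFn K (diamondIdeal K n) d = Fintype.card (T n d) := by
  set l : Fin n := ⟨n - 1, by omega⟩ with hl
  let N : (Fin (n + 2) →₀ ℕ) → (Fin (n + 2) →₀ ℕ) := fun m =>
    nf l (m 0) (fun i => m i.succ.castSucc) (m (Fin.last (n + 1)))
  have hN : ∀ a c b, N (mk a c b) = nf l a c b := by
    intro a c b
    simp only [N, mk_zero, mk_y, mk_last]
  refine hilb_eq K _ d (tm l d) (tm_inj l d) (tm_degree l d)
    (lin K fun m => monomial (N m) 1) ?_ ?_ ?_
  · apply kills
    rintro g ⟨i, j, hij, rfl⟩ m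
    rw [yy_mono, xz_mono, mul_sub, map_sub, monomial_mul, monomial_mul, one_mul, lin_mono,
      lin_mono, sub_eq_zero, eq_mk m, mk_add, mk_add, hN, hN]
    congr 2
    unfold nf
    rw [if_neg, if_neg]
    · rw [mk_inj]
      simp only [Pi.add_apply, Finset.sum_add_distrib, Finset.sum_pi_single', Finset.mem_univ,
        if_true, Pi.zero_apply, Finset.sum_const_zero]
      refine ⟨by omega, ?_, by omega⟩
      congr 1
      omega
    · rintro ⟨-, h⟩
      omega
    · rintro ⟨h, -⟩
      refine h i j hij ?_
      simp only [Pi.add_apply, Pi.single_eq_same]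
      omega
  · intro t
    rw [lin_mono]
    congr 1
    simp only [N]
    rw [nf_std _ _ _ _ (tm_std l d t), ← eq_mk]
  · intro m hm
    right
    rw [eq_mk m] at hm ⊢
    rw [degree_mk] at hm
    obtain ⟨t, ht⟩ := nf_exists l _ _ _ d hm
    refine ⟨t, ?_⟩
    rw [ht]
    exact nf_mem K hn l _ _ _

end DiamondAux

theorem hilbert_series_of_diamond (K : Type*) [Field K] (n : ℕ) (hn : 3 ≤ n) :
    (PowerSeries.mk fun d => (hilbFn K (diamondIdeal K n) d : ℚ)) *
        (1 - PowerSeries.X) ^ 2 =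
      1 + (n : PowerSeries ℚ) * PowerSeries.X + (n : PowerSeries ℚ) * PowerSeries.X ^ 2 +
        PowerSeries.X ^ 3 ∧
    (PowerSeries.mk fun d => (hilbFn K (diamondIni K n (by omega)) d : ℚ)) *
        (1 - PowerSeries.X) ^ 2 =
      1 + (n : PowerSeries ℚ) * PowerSeries.X + (n : PowerSeries ℚ) * PowerSeries.X ^ 2 +
        PowerSeries.X ^ 3 := by
  exact ⟨DiamondAux.series n _ fun d => by rw [DiamondAux.main K n hn d, DiamondAux.card_T],
    DiamondAux.series n _ fun d => by rw [DiamondAux.ini K n _ d, DiamondAux.card_T]⟩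
end

section
/- For n ≥ 3, both quotient rings S/I and S/in_<(I) are Cohen-Macaulay of Krull dimension 2, where I is the join-meet ideal of the diamond lattice D_{n+2} and in_<(I) its initial ideal with respect to the reverse lexicographic order induced by x > y_1 > ⋯ > y_n > z. -/
open MvPolynomial

/-- `f` is a regular sequence: each `f k` is a nonzerodivisor modulo the previous ones
(elementwise colon characterization) and the sequence generates a proper ideal. -/
def IsRegSeq {R : Type*} [CommRing R] {m : ℕ} (f : Fin m → R) : Prop :=
  (∀ k : Fin m, ∀ s : R,
      f k * s ∈ Ideal.span (f '' {j | j < k}) → s ∈ Ideal.span (f '' {j | j < k})) ∧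
    Ideal.span (Set.range f) ≠ ⊤

/-- A graded quotient `S/I` is Cohen–Macaulay of dimension `m` iff its Krull dimension is `m`
and there is a regular sequence of length `m` inside the graded maximal ideal. -/
def IsCMofDim {K : Type*} [Field K] {σ : Type*} (I : Ideal (MvPolynomial σ K)) (m : ℕ) :
    Prop :=
  ringKrullDim (MvPolynomial σ K ⧸ I) = m ∧
    ∃ f : Fin m → (MvPolynomial σ K ⧸ I),
      (∀ i, f i ∈ Ideal.map (Ideal.Quotient.mk I)
        (Ideal.span (Set.range (X : σ → MvPolynomial σ K)))) ∧
      IsRegSeq f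


/-- `a, b` is a weakly regular sequence modulo `J`. -/
def WReg {R : Type*} [CommRing R] (a b : R) (J : Ideal R) : Prop :=
  (∀ s, a * s ∈ J → s ∈ J) ∧ (∀ s, b * s ∈ J ⊔ Ideal.span {a} → s ∈ J ⊔ Ideal.span {a})

/-- Chains of primes containing `J` have length at most two. -/
def DimLe {R : Type*} [CommRing R] (J : Ideal R) : Prop :=
  ∀ l : LTSeries (PrimeSpectrum R), J ≤ l.head.asIdeal → l.length ≤ 2

lemma mem_sup_sing {R : Type*} [CommRing R] {J : Ideal R} {a s : R} :
    s ∈ J ⊔ Ideal.span {a} ↔ ∃ t, s - a * t ∈ J := by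
  rw [sup_comm, Ideal.mem_span_singleton_sup]
  constructor
  · rintro ⟨t, b, hb, rfl⟩
    exact ⟨t, by ring_nf; exact hb⟩
  · rintro ⟨t, ht⟩
    exact ⟨t, _, ht, by ring⟩

lemma WReg.glue {R : Type*} [CommRing R] {a b g : R} {J Q : Ideal R}
    (hQ : ∀ s, g * s ∈ J ↔ s ∈ Q) (h1 : WReg a b Q) (h2 : WReg a b (J ⊔ Ideal.span {g})) :
    WReg a b J := by
  have key : ∀ s, a * s ∈ J ⊔ Ideal.span {g} → s ∈ J ⊔ Ideal.span {g} := h2.1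
  refine ⟨fun s hs => ?_, fun s hs => ?_⟩
  · obtain ⟨t, ht⟩ := mem_sup_sing.1 (h2.1 s (Ideal.mem_sup_left hs))
    have h3 : g * (a * t) ∈ J := by
      have := J.sub_mem hs (J.mul_mem_left a ht)
      convert this using 1; ring
    have h4 : g * t ∈ J := (hQ _).2 (h1.1 _ ((hQ _).1 h3))
    convert J.add_mem ht h4 using 1; ring
  · have hs' : b * s ∈ (J ⊔ Ideal.span {g}) ⊔ Ideal.span {a} :=
      (sup_le_sup_right le_sup_left _ : J ⊔ Ideal.span {a} ≤ _) hs
    obtain ⟨v, hv⟩ := mem_sup_sing.1 (h2.2 s hs')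
    obtain ⟨t, ht⟩ := mem_sup_sing.1 hv
    obtain ⟨u, hu⟩ := mem_sup_sing.1 hs
    -- `b g t ≡ a (u - b v)` modulo `J`
    have h3 : b * (g * t) - a * (u - b * v) ∈ J := by
      have := J.sub_mem hu (J.mul_mem_left b ht)
      convert this using 1; ring
    have h4 : a * (u - b * v) ∈ J ⊔ Ideal.span {g} := by
      refine mem_sup_sing.2 ⟨b * t, ?_⟩
      convert J.neg_mem h3 using 1; ring
    obtain ⟨w, hw⟩ := mem_sup_sing.1 (key _ h4)
    have h5 : g * (b * t - a * w) ∈ J := by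
      convert J.add_mem h3 (J.mul_mem_left a hw) using 1; ring
    have h6 : b * t ∈ Q ⊔ Ideal.span {a} := mem_sup_sing.2 ⟨w, (hQ _).1 h5⟩
    obtain ⟨r, hr⟩ := mem_sup_sing.1 (h1.2 _ h6)
    refine mem_sup_sing.2 ⟨v + g * r, ?_⟩
    convert J.add_mem ht ((hQ _).2 hr) using 1; ring

lemma DimLe.glue {R : Type*} [CommRing R] {g : R} {J Q : Ideal R}
    (hQ : ∀ s, g * s ∈ J ↔ s ∈ Q) (h1 : DimLe Q) (h2 : DimLe (J ⊔ Ideal.span {g})) :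
    DimLe J := by
  intro l hl
  by_cases hg : g ∈ l.head.asIdeal
  · exact h2 l (sup_le hl ((Ideal.span_singleton_le_iff_mem _).2 hg))
  · refine h1 l fun s hs => ?_
    exact (l.head.isPrime.mem_or_mem (hl ((hQ s).2 hs))).resolve_left hg

lemma dimLe_iff {R : Type*} [CommRing R] {J : Ideal R} :
    DimLe J ↔ ringKrullDim (R ⧸ J) ≤ 2 := by
  rw [ringKrullDim_quotient, Order.krullDim]
  rw [iSup_le_iff]
  constructor
  · intro h l
    have := h (l.map Subtype.val (fun _ _ h => h)) l.head.2
    exact_mod_cast this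
  · intro h l hl
    have hm : ∀ i, l i ∈ PrimeSpectrum.zeroLocus (J : Set R) := fun i =>
      le_trans hl (l.monotone (Fin.zero_le i) : l 0 ≤ l i)
    have := h ⟨l.length, fun i => ⟨l i, hm i⟩, fun i => l.step i⟩
    exact_mod_cast this

lemma WReg.comap {R T : Type*} [CommRing R] [CommRing T] (π : R →+* T)
    (hπ : Function.Surjective π) {a b : R} {J : Ideal T} (h : WReg (π a) (π b) J) :
    WReg a b (J.comap π) := by
  have key : ∀ s, s ∈ J.comap π ⊔ Ideal.span {a} ↔ π s ∈ J ⊔ Ideal.span {π a} := by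
    intro s
    rw [mem_sup_sing, mem_sup_sing]
    constructor
    · rintro ⟨t, ht⟩
      exact ⟨π t, by simpa using ht⟩
    · rintro ⟨t, ht⟩
      obtain ⟨t, rfl⟩ := hπ t
      exact ⟨t, by simpa using ht⟩
  refine ⟨fun s hs => h.1 _ (by simpa using hs), fun s hs => ?_⟩
  rw [key] at hs ⊢
  exact h.2 _ (by simpa using hs)

lemma DimLe.comap {R T : Type*} [CommRing R] [CommRing T] (π : R →+* T)
    (hπ : Function.Surjective π) {J : Ideal T} (h : ringKrullDim (T ⧸ J) ≤ 2) :
    DimLe (J.comap π) := by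
  rw [dimLe_iff]
  have e : (R ⧸ J.comap π) ≃+* (T ⧸ J) := RingEquiv.ofBijective (Ideal.quotientMap J π le_rfl)
    ⟨Ideal.quotientMap_injective, Ideal.quotientMap_surjective hπ⟩
  rw [ringKrullDim_eq_of_ringEquiv e]
  exact h

lemma mem_eval_iff {U : Type*} [CommRing U] (x : U) (h p : Polynomial U) :
    p ∈ Ideal.span {h} ⊔ Ideal.span {Polynomial.C x + Polynomial.X} ↔
      h.eval (-x) ∣ p.eval (-x) := by
  have hroot : ∀ q : Polynomial U, q.eval (-x) = 0 → Polynomial.C x + Polynomial.X ∣ q := by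
    intro q hq
    have := Polynomial.dvd_iff_isRoot.2 (show q.IsRoot (-x) from hq)
    have e : Polynomial.X - Polynomial.C (-x) = Polynomial.C x + Polynomial.X := by
      simp [add_comm]
    rwa [e] at this
  rw [mem_sup_sing]
  constructor
  · rintro ⟨t, ht⟩
    obtain ⟨u, hu⟩ := Ideal.mem_span_singleton.1 ht
    have : p = h * u + (Polynomial.C x + Polynomial.X) * t := by rw [← hu]; ring
    refine ⟨u.eval (-x), ?_⟩
    rw [this]; simp
  · rintro ⟨c, hc⟩
    obtain ⟨t, ht⟩ := hroot (p - h * Polynomial.C c) (by simp [hc])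
    refine ⟨t, Ideal.mem_span_singleton.2 ⟨Polynomial.C c, ?_⟩⟩
    rw [← ht]; ring

lemma wreg_poly {U : Type*} [CommRing U] [IsDomain U] [UniqueFactorizationMonoid U] (x : U)
    (h b : Polynomial U) (h0 : h.eval (-x) ≠ 0) (hb : IsRelPrime (h.eval (-x)) (b.eval (-x))) :
    WReg (Polynomial.C x + Polynomial.X) b (Ideal.span {h}) := by
  have e : Polynomial.X - Polynomial.C (-x) = Polynomial.C x + Polynomial.X := by
    simp [add_comm]
  have hp : Prime (Polynomial.C x + Polynomial.X) := e ▸ Polynomial.prime_X_sub_C (-x)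
  refine ⟨fun s hs => ?_, fun s hs => ?_⟩
  · rw [Ideal.mem_span_singleton] at hs ⊢
    have hr : IsRelPrime (Polynomial.C x + Polynomial.X) h := by
      rw [hp.irreducible.isRelPrime_iff_not_dvd]
      rintro ⟨c, rfl⟩
      simp at h0
    exact hr.symm.dvd_of_dvd_mul_left hs
  · rw [mem_eval_iff] at hs ⊢
    rw [Polynomial.eval_mul] at hs
    exact hb.dvd_of_dvd_mul_left hs

abbrev UU (K : Type*) [Field K] := MvPolynomial (Fin 2) K
abbrev TT (K : Type*) [Field K] := Polynomial (MvPolynomial (Fin 2) K)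
noncomputable def xT (K : Type*) [Field K] : TT K := Polynomial.C (X 0)
noncomputable def yT (K : Type*) [Field K] : TT K := Polynomial.C (X 1)
noncomputable def zT (K : Type*) [Field K] : TT K := Polynomial.X

lemma relprime_U (K : Type*) [Field K] : IsRelPrime (X 0 : UU K) (X 1) := by
  rw [(X_prime (R := K) (i := (0 : Fin 2))).irreducible.isRelPrime_iff_not_dvd, X_dvd_X]
  simp

lemma relprime_sq (K : Type*) [Field K] : IsRelPrime ((X 0 : UU K) * X 0) (X 1 * X 1) :=
  ((relprime_U K).mul_left (relprime_U K)).mul_right ((relprime_U K).mul_left (relprime_U K))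

lemma relprime_T (K : Type*) [Field K] : IsRelPrime (xT K * zT K) (yT K) := by
  refine IsRelPrime.mul_left ?_ ?_
  · have : Prime (xT K) := Polynomial.prime_C_iff.2 X_prime
    rw [this.irreducible.isRelPrime_iff_not_dvd]
    intro h
    rw [xT, yT, Polynomial.C_dvd_iff_dvd_coeff] at h
    have := h 0
    rw [Polynomial.coeff_C_zero, X_dvd_X] at this
    simp at this
  · have : Prime (zT K) := Polynomial.prime_X
    rw [this.irreducible.isRelPrime_iff_not_dvd]
    intro h
    rw [zT, yT, Polynomial.X_dvd_iff] at h
    simp at h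

lemma dim_U (K : Type*) [Field K] : ringKrullDim (UU K) = 2 := by
  rw [MvPolynomial.ringKrullDim_of_isNoetherianRing, ringKrullDim_eq_zero_of_field]
  simp

lemma dim_T (K : Type*) [Field K] (h : TT K) (h0 : h ≠ 0) :
    ringKrullDim (TT K ⧸ Ideal.span {h}) ≤ 2 := by
  have h1 := ringKrullDim_quotient_succ_le_of_nonZeroDivisor (mem_nonZeroDivisors_of_ne_zero h0)
  rw [Polynomial.ringKrullDim_of_isNoetherianRing, dim_U] at h1
  exact (ENat.WithBot.add_le_add_one_right_iff).1 h1

lemma relprime_add {R : Type*} [CommRing R] {a b : R} (c : R) (h : IsRelPrime a b) :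
    IsRelPrime a (b + a * c) := by
  apply IsRelPrime.of_add_mul_left_right (z := -c)
  convert h using 1; ring

/-- case `xz`. -/
lemma wreg1 (K : Type*) [Field K] (c : TT K) :
    WReg (xT K + zT K) (yT K * yT K + xT K * zT K * c) (Ideal.span {xT K * zT K}) := by
  refine wreg_poly _ _ _ ?_ ?_
  · simp [xT, zT]
  · have := relprime_add (c.eval (-X 0)) ((relprime_sq K).neg_left)
    simpa [xT, zT, yT] using this

/-- case `y²`. -/
lemma wreg2 (K : Type*) [Field K] :
    WReg (xT K + zT K) (xT K * zT K + yT K * yT K) (Ideal.span {yT K * yT K}) := by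
  refine wreg_poly _ _ _ ?_ ?_
  · simp [yT]
  · have := relprime_add 1 ((relprime_sq K).neg_left).symm
    simpa [xT, zT, yT] using this

/-- case `y² - xz`. -/
lemma wreg3 (K : Type*) [Field K] :
    WReg (xT K + zT K) (xT K * zT K) (Ideal.span {yT K * yT K - xT K * zT K}) := by
  have := relprime_add (-1) ((relprime_sq K).neg_left)
  refine wreg_poly _ _ _ ?_ ?_
  · intro h0
    simp [xT, zT, yT] at h0
    have := congrArg (MvPolynomial.eval ![0, 1]) h0
    simp at this
  · simpa [xT, zT, yT] using this.symm

/-- The map `S → T` with `x ↦ x`, `z ↦ z`, `y_i ↦ v i`. -/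
noncomputable def piM (K : Type*) [Field K] (n : ℕ) {T : Type*} [CommRing T] [Algebra K T]
    (x z : T) (v : Fin n → T) : MvPolynomial (Fin (n + 2)) K →ₐ[K] T :=
  aeval (fun i => Fin.lastCases (motive := fun _ => T) z
    (fun j => Fin.cases (motive := fun _ => T) x v j) i)

section
variable {K : Type*} [Field K] {n : ℕ} {T : Type*} [CommRing T] [Algebra K T]
    (x z : T) (v : Fin n → T)

@[simp] lemma piM_x : piM K n x z v (xP K n) = x := by
  rw [piM, xP, aeval_X]
  have : (0 : Fin (n + 2)) = (0 : Fin (n + 1)).castSucc := rfl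
  rw [this, Fin.lastCases_castSucc]; rfl

@[simp] lemma piM_z : piM K n x z v (zP K n) = z := by
  rw [piM, zP, aeval_X, Fin.lastCases_last]

@[simp] lemma piM_y (i : Fin n) : piM K n x z v (yP K n i) = v i := by
  rw [piM, yP, aeval_X, Fin.lastCases_castSucc, Fin.cases_succ]

lemma hom_ext' {f g : MvPolynomial (Fin (n + 2)) K →ₐ[K] T} (hx : f (xP K n) = g (xP K n))
    (hz : f (zP K n) = g (zP K n)) (hy : ∀ i, f (yP K n i) = g (yP K n i)) : f = g := by
  refine MvPolynomial.algHom_ext fun i => ?_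
  refine Fin.lastCases hz (fun j => ?_) i
  refine Fin.cases hx (fun k => hy k) j
end

/-- The section `T → S` with `x ↦ x`, `z ↦ z`, `y ↦ y_k`. -/
noncomputable def iotaM (K : Type*) [Field K] (n : ℕ) (k : Fin n) :
    TT K →ₐ[K] MvPolynomial (Fin (n + 2)) K :=
  Polynomial.eval₂AlgHom (aeval ![xP K n, yP K n k]) (zP K n) (fun _ => Commute.all _ _)

section
variable {K : Type*} [Field K] {n : ℕ} (k : Fin n)

@[simp] lemma iota_x : iotaM K n k (xT K) = xP K n := by simp [iotaM, xT]
@[simp] lemma iota_y : iotaM K n k (yT K) = yP K n k := by simp [iotaM, yT]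
@[simp] lemma iota_z : iotaM K n k (zT K) = zP K n := by simp [iotaM, zT]

lemma T_ext {T : Type*} [CommRing T] [Algebra K T] {f g : TT K →ₐ[K] T}
    (hx : f (xT K) = g (xT K)) (hy : f (yT K) = g (yT K)) (hz : f (zT K) = g (zT K)) : f = g := by
  apply Polynomial.algHom_ext'
  · apply MvPolynomial.algHom_ext
    intro i
    fin_cases i
    · simpa [xT] using hx
    · simpa [yT] using hy
  · exact hz

lemma sub_iota_mem (v : Fin n → TT K) (L : Ideal (MvPolynomial (Fin (n + 2)) K))
    (hL : ∀ i, yP K n i - iotaM K n k (v i) ∈ L) (s : MvPolynomial (Fin (n + 2)) K) :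
    s - iotaM K n k (piM K n (xT K) (zT K) v s) ∈ L := by
  have : Ideal.Quotient.mkₐ K L = (Ideal.Quotient.mkₐ K L).comp
      ((iotaM K n k).comp (piM K n (xT K) (zT K) v)) := by
    refine hom_ext' ?_ ?_ fun i => ?_
    · simp
    · simp
    · have := hL i
      rw [← Ideal.Quotient.mk_eq_mk_iff_sub_mem] at this
      simpa using this
  have h := DFunLike.congr_fun this s
  rw [← Ideal.Quotient.mk_eq_mk_iff_sub_mem]
  simpa using h

lemma pi_surj (v : Fin n → TT K) (hv : v k = yT K) :
    Function.Surjective (piM K n (xT K) (zT K) v) := by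
  intro t
  refine ⟨iotaM K n k t, ?_⟩
  have : (piM K n (xT K) (zT K) v).comp (iotaM K n k) = AlgHom.id K _ := by
    refine T_ext ?_ ?_ ?_ <;> simp [hv]
  exact DFunLike.congr_fun this t

/-- Membership in `Q` from `π s ∈ (h)`. -/
lemma mem_of_pi (v : Fin n → TT K) (L : Ideal (MvPolynomial (Fin (n + 2)) K))
    (hL : ∀ i, yP K n i - iotaM K n k (v i) ∈ L) (h : TT K) (hh : iotaM K n k h ∈ L)
    (s : MvPolynomial (Fin (n + 2)) K) (hs : h ∣ piM K n (xT K) (zT K) v s) : s ∈ L := by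
  obtain ⟨c, hc⟩ := hs
  have h1 := sub_iota_mem k v L hL s
  rw [hc, map_mul] at h1
  have := L.add_mem h1 (L.mul_mem_right (iotaM K n k c) hh)
  simpa using this

end

/-- `J_m`. -/
noncomputable def JJ (K : Type*) [Field K] (n m : ℕ) : Ideal (MvPolynomial (Fin (n + 2)) K) :=
  Ideal.span ({f | ∃ i j : Fin n, i < j ∧ f = yP K n i * yP K n j} ∪ {xP K n * zP K n} ∪
    {f | ∃ i : Fin n, (i : ℕ) < m ∧ f = yP K n i})

noncomputable def bb (K : Type*) [Field K] (n m : ℕ) : MvPolynomial (Fin (n + 2)) K :=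
  xP K n * zP K n * (1 - (m : MvPolynomial (Fin (n + 2)) K)) + ∑ i, yP K n i * yP K n i

noncomputable def Qk (K : Type*) [Field K] (n : ℕ) (k : Fin n) :
    Ideal (MvPolynomial (Fin (n + 2)) K) :=
  (Ideal.span {xT K * zT K}).comap
    (piM K n (xT K) (zT K) (Pi.single k (yT K)) :
      MvPolynomial (Fin (n + 2)) K →+* TT K)

lemma pi_single_bb (K : Type*) [Field K] (n m : ℕ) (k : Fin n) :
    piM K n (xT K) (zT K) (Pi.single k (yT K)) (bb K n m) =
      yT K * yT K + xT K * zT K * (1 - (m : TT K)) := by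
  have : ∑ i, (Pi.single k (yT K) : Fin n → TT K) i * (Pi.single k (yT K) : Fin n → TT K) i
      = yT K * yT K := by
    rw [Finset.sum_eq_single k]
    · simp
    · intro b _ hb; simp [hb]
    · simp
  simp only [bb, map_add, map_mul, map_sub, map_one, map_natCast, map_sum, piM_x, piM_y, piM_z,
    this]
  ring

lemma Qk_good (K : Type*) [Field K] (n m : ℕ) (k : Fin n) :
    WReg (xP K n + zP K n) (bb K n m) (Qk K n k) ∧ DimLe (Qk K n k) := by
  have hs : Function.Surjective
      ((piM K n (xT K) (zT K) (Pi.single k (yT K)) :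
      MvPolynomial (Fin (n + 2)) K →+* TT K)) :=
    pi_surj k _ (Pi.single_eq_same _ _)
  refine ⟨WReg.comap _ hs ?_, DimLe.comap _ hs (dim_T K _ ?_)⟩
  · have := wreg1 K (1 - (m : TT K))
    rw [← pi_single_bb K n m k] at this
    simpa using this
  · simp [xT, zT]

lemma JJ_le_Qk (K : Type*) [Field K] (n m : ℕ) (k : Fin n) (hm : m ≤ k) :
    JJ K n m ≤ Qk K n k := by
  rw [JJ, Ideal.span_le]
  rintro f ((⟨i, j, hij, rfl⟩ | rfl) | ⟨i, hi, rfl⟩)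
  · have : (Pi.single k (yT K) : Fin n → TT K) i * (Pi.single k (yT K) : Fin n → TT K) j = 0 := by
      by_cases h : i = k
      · have : j ≠ k := by rintro rfl; exact hij.ne h
        simp [this]
      · simp [h]
    simp [Qk, this]
  · simp [Qk]
  · have : i ≠ k := by rintro rfl; omega
    simp [Qk, this]

lemma JJ_colon (K : Type*) [Field K] (n m : ℕ) (k : Fin n) (hm : m = k)
    (s : MvPolynomial (Fin (n + 2)) K) : yP K n k * s ∈ JJ K n m ↔ s ∈ Qk K n k := by
  constructor
  · intro h
    have h1 := JJ_le_Qk K n m k hm.le h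
    simp only [Qk, Ideal.mem_comap, Ideal.mem_span_singleton, RingHom.coe_coe, map_mul, piM_y,
      Pi.single_eq_same] at h1 ⊢
    exact (relprime_T K).dvd_of_dvd_mul_left h1
  · intro h
    simp only [Qk, Ideal.mem_comap, Ideal.mem_span_singleton, RingHom.coe_coe] at h
    have := mem_of_pi k (Pi.single k (yT K)) ((JJ K n m).colon {yP K n k}) ?_ _ ?_ s h
    · rw [Submodule.mem_colon_singleton] at this
      simpa [mul_comm] using this
    · intro i
      rw [Submodule.mem_colon_singleton]
      by_cases hi : i = k
      · subst hi; simp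
      · simp only [ne_eq, hi, not_false_eq_true, Pi.single_eq_of_ne, map_zero, sub_zero,
          smul_eq_mul]
        refine Ideal.subset_span (Or.inl (Or.inl ?_))
        rcases lt_or_gt_of_ne hi with h | h
        · exact ⟨i, k, h, rfl⟩
        · exact ⟨k, i, h, mul_comm _ _⟩
    · rw [Submodule.mem_colon_singleton]
      simp only [map_mul, iota_x, iota_z, smul_eq_mul]
      exact Ideal.mul_mem_right _ _ (Ideal.subset_span (Or.inl (Or.inr rfl)))

lemma JJ_last (K : Type*) [Field K] (n : ℕ) (k : Fin n) (hk : (k : ℕ) + 1 = n) :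
    JJ K n k = Qk K n k := by
  refine le_antisymm (JJ_le_Qk K n k k le_rfl) fun s h => ?_
  simp only [Qk, Ideal.mem_comap, Ideal.mem_span_singleton, RingHom.coe_coe] at h
  refine mem_of_pi k (Pi.single k (yT K)) (JJ K n k) ?_ _ ?_ s h
  · intro i
    by_cases hi : i = k
    · subst hi; simp
    · simp only [ne_eq, hi, not_false_eq_true, Pi.single_eq_of_ne, map_zero, sub_zero]
      refine Ideal.subset_span (Or.inr ⟨i, ?_, rfl⟩)
      have : (i : ℕ) ≠ k := fun h => hi (Fin.ext h)
      omega
  · simp only [map_mul, iota_x, iota_z]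
    exact Ideal.subset_span (Or.inl (Or.inr rfl))

lemma JJ_succ (K : Type*) [Field K] (n : ℕ) (k : Fin n) :
    JJ K n k ⊔ Ideal.span {yP K n k} = JJ K n (k + 1) := by
  rw [JJ, JJ, ← Ideal.span_union, Set.union_assoc]
  congr 2
  ext f
  simp only [Set.mem_union, Set.mem_ofPred_eq, Set.mem_singleton_iff]
  constructor
  · rintro (⟨i, hi, rfl⟩ | rfl)
    · exact ⟨i, by omega, rfl⟩
    · exact ⟨k, by omega, rfl⟩
  · rintro ⟨i, hi, rfl⟩
    rcases Nat.lt_succ_iff_lt_or_eq.1 hi with h | h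
    · exact Or.inl ⟨i, h, rfl⟩
    · right; congr 1; exact Fin.ext h

lemma JJ_good (K : Type*) [Field K] (n m d : ℕ) : ∀ k : Fin n, (k : ℕ) + 1 + d = n →
    WReg (xP K n + zP K n) (bb K n m) (JJ K n k) ∧ DimLe (JJ K n k) := by
  induction d with
  | zero =>
    intro k hk
    rw [JJ_last K n k hk]
    exact Qk_good K n m k
  | succ d ih =>
    intro k hk
    have h := ih ⟨k + 1, by omega⟩ (by simp; omega)
    simp only at h
    rw [← JJ_succ] at h
    exact ⟨WReg.glue (JJ_colon K n k k rfl) (Qk_good K n m k).1 h.1,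
      DimLe.glue (JJ_colon K n k k rfl) (Qk_good K n m k).2 h.2⟩

noncomputable def QI (K : Type*) [Field K] (n : ℕ) : Ideal (MvPolynomial (Fin (n + 2)) K) :=
  (Ideal.span {yT K * yT K - xT K * zT K}).comap
    (piM K n (xT K) (zT K) (fun _ => yT K) :
      MvPolynomial (Fin (n + 2)) K →+* TT K)

noncomputable def Qin (K : Type*) [Field K] (n : ℕ) (k : Fin n) :
    Ideal (MvPolynomial (Fin (n + 2)) K) :=
  (Ideal.span {yT K * yT K}).comap
    (piM K n (xT K) (zT K) (Pi.single k (yT K)) :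
      MvPolynomial (Fin (n + 2)) K →+* TT K)

lemma QI_good (K : Type*) [Field K] (n : ℕ) (k : Fin n) :
    WReg (xP K n + zP K n) (bb K n n) (QI K n) ∧ DimLe (QI K n) := by
  have hs : Function.Surjective
      ((piM K n (xT K) (zT K) (fun _ => yT K) :
      MvPolynomial (Fin (n + 2)) K →+* TT K)) := pi_surj k _ rfl
  refine ⟨WReg.comap _ hs ?_, DimLe.comap _ hs (dim_T K _ ?_)⟩
  · have h := wreg3 K
    have e : (piM K n (xT K) (zT K) (fun _ => yT K)) (bb K n n) =
        xT K * zT K + (yT K * yT K - xT K * zT K) * n := by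
      simp only [bb, map_add, map_mul, map_sub, map_one, map_natCast, map_sum, piM_x, piM_y, piM_z,
        Finset.sum_const, Finset.card_univ, Fintype.card_fin, nsmul_eq_mul]
      ring
    simp only [RingHom.coe_coe, map_add, piM_x, piM_z, e]
    refine ⟨h.1, fun s hs => h.2 s ?_⟩
    have h2 : (yT K * yT K - xT K * zT K) * n * s ∈
        Ideal.span {yT K * yT K - xT K * zT K} ⊔ Ideal.span {xT K + zT K} :=
      Ideal.mem_sup_left (Ideal.mul_mem_right _ _ (Ideal.mul_mem_right _ _
        (Ideal.mem_span_singleton_self _)))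
    convert Ideal.sub_mem _ hs h2 using 1
    ring
  · intro h0
    have := congrArg (fun p => MvPolynomial.eval ![0, 1] (Polynomial.eval 0 p)) h0
    simp [xT, yT, zT] at this

lemma Qin_good (K : Type*) [Field K] (n : ℕ) (k : Fin n) :
    WReg (xP K n + zP K n) (bb K n 0) (Qin K n k) ∧ DimLe (Qin K n k) := by
  have hs : Function.Surjective
      ((piM K n (xT K) (zT K) (Pi.single k (yT K)) :
      MvPolynomial (Fin (n + 2)) K →+* TT K)) :=
    pi_surj k _ (Pi.single_eq_same _ _)
  refine ⟨WReg.comap _ hs ?_, DimLe.comap _ hs (dim_T K _ ?_)⟩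
  · have := wreg2 K
    rw [RingHom.coe_coe, pi_single_bb]
    simpa [add_comm (xT K * zT K)] using this
  · simp [yT]

lemma I_le_QI (K : Type*) [Field K] (n : ℕ) : diamondIdeal K n ≤ QI K n := by
  rw [diamondIdeal, Ideal.span_le]
  rintro f ⟨i, j, hij, rfl⟩
  simp [QI]

lemma gen_mem (K : Type*) [Field K] (n : ℕ) (i j : Fin n) (h : i ≠ j) :
    yP K n i * yP K n j - xP K n * zP K n ∈ diamondIdeal K n := by
  rcases lt_or_gt_of_ne h with h | h
  · exact Ideal.subset_span ⟨i, j, h, rfl⟩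
  · rw [mul_comm]; exact Ideal.subset_span ⟨j, i, h, by ring⟩

lemma I_colon (K : Type*) [Field K] (n : ℕ) (hn : 3 ≤ n) (s : MvPolynomial (Fin (n + 2)) K) :
    (xP K n * zP K n) * s ∈ diamondIdeal K n ↔ s ∈ QI K n := by
  constructor
  · intro h
    have h1 := I_le_QI K n h
    simp only [QI, Ideal.mem_comap, Ideal.mem_span_singleton, RingHom.coe_coe, map_mul, piM_x,
      piM_z] at h1 ⊢
    have h2 : IsRelPrime (xT K * zT K) (yT K * yT K - xT K * zT K) := by
      have := relprime_add (-1) ((relprime_T K).mul_right (relprime_T K))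
      convert this using 1; ring
    exact h2.symm.dvd_of_dvd_mul_left h1
  · intro h
    simp only [QI, Ideal.mem_comap, Ideal.mem_span_singleton, RingHom.coe_coe] at h
    let k : Fin n := ⟨0, by omega⟩
    have := mem_of_pi k (fun _ => yT K) ((diamondIdeal K n).colon {xP K n * zP K n}) ?_ _ ?_ s h
    · rw [Submodule.mem_colon_singleton] at this
      simpa [mul_comm] using this
    · intro i
      rw [Submodule.mem_colon_singleton]
      simp only [iota_y, smul_eq_mul]
      by_cases hi : i = k
      · subst hi; simp
      · obtain ⟨l, hl1, hl2⟩ : ∃ l : Fin n, l ≠ i ∧ l ≠ k := by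
          by_cases h1 : (i : ℕ) = 1
          · exact ⟨⟨2, by omega⟩, by simp [Fin.ext_iff, h1], by simp [k, Fin.ext_iff]⟩
          · exact ⟨⟨1, by omega⟩, by simp only [ne_eq, Fin.ext_iff]; omega,
              by simp [k, Fin.ext_iff]⟩
        have e1 := Ideal.mul_mem_left _ (yP K n k) (gen_mem K n i l hl1.symm)
        have e2 := Ideal.mul_mem_left _ (yP K n i) (gen_mem K n k l hl2.symm)
        convert Ideal.sub_mem _ e1 e2 using 1
        ring
    · rw [Submodule.mem_colon_singleton]
      simp only [map_mul, map_sub, iota_x, iota_y, iota_z, smul_eq_mul]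
      let a : Fin n := ⟨1, by omega⟩
      let b : Fin n := ⟨2, by omega⟩
      have ha := gen_mem K n k a (by simp [k, a])
      have hb := gen_mem K n k b (by simp [k, b])
      have hab := gen_mem K n a b (by simp [a, b])
      have e1 := Ideal.mul_mem_left _ (-(yP K n k * yP K n k)) hab
      have e2 := Ideal.mul_mem_left _ (yP K n k * yP K n b) ha
      have e3 := Ideal.mul_mem_left _ (xP K n * zP K n) hb
      convert Ideal.add_mem _ e1 (Ideal.add_mem _ e2 e3) using 1
      ring

lemma I_sup (K : Type*) [Field K] (n : ℕ) :
    diamondIdeal K n ⊔ Ideal.span {xP K n * zP K n} = JJ K n 0 := by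
  have hxz : xP K n * zP K n ∈ JJ K n 0 := Ideal.subset_span (Or.inl (Or.inr rfl))
  apply le_antisymm
  · refine sup_le ?_ ((Ideal.span_singleton_le_iff_mem _).2 hxz)
    rw [diamondIdeal, Ideal.span_le]
    rintro f ⟨i, j, hij, rfl⟩
    exact Ideal.sub_mem _ (Ideal.subset_span (Or.inl (Or.inl ⟨i, j, hij, rfl⟩))) hxz
  · have hxz : xP K n * zP K n ∈ diamondIdeal K n ⊔ Ideal.span {xP K n * zP K n} :=
      Ideal.mem_sup_right (Ideal.mem_span_singleton_self _)
    rw [JJ, Ideal.span_le]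
    rintro f ((⟨i, j, hij, rfl⟩ | rfl) | ⟨i, hi, rfl⟩)
    · have := Ideal.add_mem _ (Ideal.mem_sup_left (gen_mem K n i j hij.ne)) hxz
      simpa using this
    · exact hxz
    · omega

lemma in_le_Qin (K : Type*) [Field K] (n : ℕ) (hn : 1 ≤ n) :
    diamondIni K n hn ≤ Qin K n ⟨n - 1, by omega⟩ := by
  rw [diamondIni, Ideal.span_le]
  rintro f ((⟨i, j, hij, rfl⟩ | ⟨k, hk, rfl⟩) | rfl)
  · have : i ≠ ⟨n - 1, by omega⟩ := by
      intro h
      have := j.2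
      rw [Fin.ext_iff] at h
      rw [Fin.lt_def] at hij
      simp only at h
      omega
    simp [Qin, this]
  · have : k ≠ ⟨n - 1, by omega⟩ := by
      intro h
      rw [Fin.ext_iff] at h
      simp only at h
      omega
    simp [Qin, this]
  · simp only [Qin, SetLike.mem_coe, Ideal.mem_comap, RingHom.coe_coe, map_mul, map_pow, piM_x,
      piM_y, piM_z, Pi.single_eq_same, Ideal.mem_span_singleton]
    exact ⟨xT K * zT K, by ring⟩

lemma in_colon (K : Type*) [Field K] (n : ℕ) (hn : 1 ≤ n) (s : MvPolynomial (Fin (n + 2)) K) :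
    (xP K n * zP K n) * s ∈ diamondIni K n hn ↔ s ∈ Qin K n ⟨n - 1, by omega⟩ := by
  constructor
  · intro h
    have h1 := in_le_Qin K n hn h
    simp only [Qin, Ideal.mem_comap, Ideal.mem_span_singleton, RingHom.coe_coe, map_mul, piM_x,
      piM_z] at h1 ⊢
    exact ((relprime_T K).mul_right (relprime_T K)).symm.dvd_of_dvd_mul_left h1
  · intro h
    simp only [Qin, Ideal.mem_comap, Ideal.mem_span_singleton, RingHom.coe_coe] at h
    have := mem_of_pi (⟨n - 1, by omega⟩ : Fin n) _
      ((diamondIni K n hn).colon {xP K n * zP K n}) ?_ _ ?_ s h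
    · rw [Submodule.mem_colon_singleton] at this
      simpa [mul_comm] using this
    · intro i
      rw [Submodule.mem_colon_singleton]
      by_cases hi : i = ⟨n - 1, by omega⟩
      · subst hi; simp
      · simp only [ne_eq, hi, not_false_eq_true, Pi.single_eq_of_ne, map_zero, sub_zero,
          smul_eq_mul]
        refine Ideal.subset_span (Or.inl (Or.inr ⟨i, ?_, by ring⟩))
        rw [Fin.ext_iff] at hi
        simp only at hi
        omega
    · rw [Submodule.mem_colon_singleton]
      simp only [map_mul, iota_y, smul_eq_mul]
      refine Ideal.subset_span (Or.inr ?_)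
      rw [Set.mem_singleton_iff]
      ring

lemma in_sup (K : Type*) [Field K] (n : ℕ) (hn : 1 ≤ n) :
    diamondIni K n hn ⊔ Ideal.span {xP K n * zP K n} = JJ K n 0 := by
  have hxz : xP K n * zP K n ∈ JJ K n 0 := Ideal.subset_span (Or.inl (Or.inr rfl))
  apply le_antisymm
  · refine sup_le ?_ ((Ideal.span_singleton_le_iff_mem _).2 hxz)
    rw [diamondIni, Ideal.span_le]
    rintro f ((⟨i, j, hij, rfl⟩ | ⟨k, hk, rfl⟩) | rfl)
    · exact Ideal.subset_span (Or.inl (Or.inl ⟨i, j, hij, rfl⟩))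
    · rw [SetLike.mem_coe]
      convert Ideal.mul_mem_left _ (yP K n k) hxz using 1
      ring
    · rw [SetLike.mem_coe]
      convert Ideal.mul_mem_left _ (yP K n ⟨n - 1, by omega⟩ ^ 2) hxz using 1
      ring
  · rw [JJ, Ideal.span_le]
    rintro f ((⟨i, j, hij, rfl⟩ | rfl) | ⟨i, hi, rfl⟩)
    · exact Ideal.mem_sup_left (Ideal.subset_span (Or.inl (Or.inl ⟨i, j, hij, rfl⟩)))
    · exact Ideal.mem_sup_right (Ideal.mem_span_singleton_self _)
    · omega

lemma dim_ge (K : Type*) [Field K] (n : ℕ) (J : Ideal (MvPolynomial (Fin (n + 2)) K)) (k : Fin n)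
    (hJ : ∀ f ∈ J, piM K n (0 : UU K) (X 0) (Pi.single k (X 1)) f = 0) :
    2 ≤ ringKrullDim (MvPolynomial (Fin (n + 2)) K ⧸ J) := by
  let φ := piM K n (0 : UU K) (X 0) (Pi.single k (X 1))
  have hs : Function.Surjective φ := by
    intro t
    refine ⟨aeval ![zP K n, yP K n k] t, ?_⟩
    have : φ.comp (aeval ![zP K n, yP K n k]) = AlgHom.id K _ := by
      apply MvPolynomial.algHom_ext
      intro i
      fin_cases i <;> simp [φ]
    exact DFunLike.congr_fun this t
  rw [← dim_U K]
  exact ringKrullDim_le_of_surjective (Ideal.Quotient.lift J (φ : _ →+* UU K) hJ)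
    (Ideal.Quotient.lift_surjective_of_surjective _ _ hs)

lemma cm_of (K : Type*) [Field K] (n m : ℕ) (J : Ideal (MvPolynomial (Fin (n + 2)) K)) (k : Fin n)
    (hJ : ∀ f ∈ J, piM K n (0 : UU K) (X 0) (Pi.single k (X 1)) f = 0)
    (hJ0 : ∀ f ∈ J, constantCoeff f = 0)
    (hW : WReg (xP K n + zP K n) (bb K n m) J) (hD : DimLe J) : IsCMofDim J 2 := by
  refine ⟨le_antisymm (dimLe_iff.1 hD) (dim_ge K n J k hJ),
    ![Ideal.Quotient.mk J (xP K n + zP K n), Ideal.Quotient.mk J (bb K n m)], ?_, ?_, ?_⟩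
  · have hX : ∀ i, (X i : MvPolynomial (Fin (n + 2)) K) ∈ Ideal.span (Set.range X) :=
      fun i => Ideal.subset_span ⟨i, rfl⟩
    intro i
    fin_cases i
    · exact Ideal.mem_map_of_mem _ (Ideal.add_mem _ (hX _) (hX _))
    · refine Ideal.mem_map_of_mem _ (Ideal.add_mem _ ?_ (Ideal.sum_mem _ fun i _ => ?_))
      · exact Ideal.mul_mem_right _ _ (Ideal.mul_mem_right _ _ (hX _))
      · exact Ideal.mul_mem_right _ _ (hX _)
  · intro i s
    obtain ⟨s, rfl⟩ := Ideal.Quotient.mk_surjective s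
    fin_cases i
    · have : {j : Fin 2 | j < 0} = ∅ := by ext j; simp
      simp only [Fin.zero_eta, Matrix.cons_val_zero, this, Set.image_empty, Ideal.span_empty,
        Ideal.mem_bot, ← map_mul, Ideal.Quotient.eq_zero_iff_mem]
      exact hW.1 s
    · have : {j : Fin 2 | j < 1} = {0} := by ext j; fin_cases j <;> simp
      have e : Ideal.span {Ideal.Quotient.mk J (xP K n + zP K n)} =
          (Ideal.span {xP K n + zP K n}).map (Ideal.Quotient.mk J) := by
        rw [Ideal.map_span, Set.image_singleton]
      simp only [Fin.mk_one, Matrix.cons_val_one, Matrix.cons_val_zero, this, Set.image_singleton,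
        ← map_mul, e]
      rw [Ideal.mem_quotient_iff_mem_sup, Ideal.mem_quotient_iff_mem_sup, sup_comm]
      exact hW.2 s
  · let ε : (MvPolynomial (Fin (n + 2)) K ⧸ J) →+* K := Ideal.Quotient.lift J constantCoeff hJ0
    refine ne_top_of_le_ne_top (RingHom.ker_ne_top ε) ?_
    rw [Ideal.span_le]
    rintro _ ⟨i, rfl⟩
    rw [SetLike.mem_coe, RingHom.mem_ker]
    fin_cases i
    · simp [ε, xP, zP]
    · simp [ε, bb, xP, yP, zP]

lemma single_zero {T : Type*} [CommRing T] {n : ℕ} (k i j : Fin n) (h : i < j) (t : T) :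
    (Pi.single k t : Fin n → T) i * (Pi.single k t : Fin n → T) j = 0 := by
  by_cases h1 : i = k
  · have : j ≠ k := by rintro rfl; exact h.ne h1
    simp [this]
  · simp [h1]

lemma le_ker_of_gens {R T : Type*} [CommRing R] [CommRing T] (φ : R →+* T) (A : Set R)
    (h : ∀ f ∈ A, φ f = 0) : ∀ f ∈ Ideal.span A, φ f = 0 := by
  have : Ideal.span A ≤ RingHom.ker φ := Ideal.span_le.2 h
  exact this

theorem diamond_CM_of_dim_two (K : Type*) [Field K] (n : ℕ) (hn : 3 ≤ n) :
    IsCMofDim (diamondIdeal K n) 2 ∧ IsCMofDim (diamondIni K n (by omega)) 2 := by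
  constructor
  · have h0 := JJ_good K n n (n - 1) ⟨0, by omega⟩ (by simp; omega)
    simp only at h0
    rw [← I_sup] at h0
    have hQ := QI_good K n ⟨0, by omega⟩
    refine cm_of K n n _ ⟨0, by omega⟩ ?_ ?_ (WReg.glue (I_colon K n hn) hQ.1 h0.1)
      (DimLe.glue (I_colon K n hn) hQ.2 h0.2)
    · refine le_ker_of_gens (R := MvPolynomial (Fin (n + 2)) K)
        (piM K n (0 : UU K) (X 0) (Pi.single ⟨0, by omega⟩ (X 1))).toRingHom _ ?_
      rintro f ⟨i, j, hij, rfl⟩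
      simp [single_zero _ i j hij]
    · refine le_ker_of_gens (R := MvPolynomial (Fin (n + 2)) K) constantCoeff _ ?_
      rintro f ⟨i, j, hij, rfl⟩
      simp [xP, yP]
  · have hn1 : 1 ≤ n := by omega
    have h0 := JJ_good K n 0 (n - 1) ⟨0, by omega⟩ (by simp; omega)
    simp only at h0
    rw [← in_sup K n hn1] at h0
    have hQ := Qin_good K n ⟨n - 1, by omega⟩
    refine cm_of K n 0 _ ⟨0, by omega⟩ ?_ ?_ (WReg.glue (in_colon K n hn1) hQ.1 h0.1)
      (DimLe.glue (in_colon K n hn1) hQ.2 h0.2)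
    · refine le_ker_of_gens (R := MvPolynomial (Fin (n + 2)) K)
        (piM K n (0 : UU K) (X 0) (Pi.single ⟨0, by omega⟩ (X 1))).toRingHom _ ?_
      rintro f ((⟨i, j, hij, rfl⟩ | ⟨k, hk, rfl⟩) | rfl)
      · simp [single_zero _ i j hij]
      · simp
      · simp
    · refine le_ker_of_gens (R := MvPolynomial (Fin (n + 2)) K) constantCoeff _ ?_
      rintro f ((⟨i, j, hij, rfl⟩ | ⟨k, hk, rfl⟩) | rfl) <;> simp [xP, yP]
end
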